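/- Let (e,f0) ∈ Δ = {(e,f) : 0 < f < e < 1}, set s = √((1−e²)(1−f0²)), f1 = √(e(e+f0)/(1+e f0+s)) and f2 = √(e(e−f0)/(1−e f0+s)). Then (e,f1) ∈ Δ and (e,f2) ∈ Δ, and the billiard rotation numbers satisfy ρ̂(e,f1) = ρ̂(e,f0)/2 and ρ̂(e,f2) = 1/2 − ρ̂(e,f0)/2. -/

import Mathlib

/-!
Put `y = e sn(u, e)`, so that `du = dy / √((1 - y²)(e² - y²))` and `u = K` at `y = e`. The caustic
parameter `f` and the angle `ω̂(e,f)` are complementary: `e sin ω̂(e,f)` is the image of `f` under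
`u ↦ K - u`, hence `ρ̂(e,f) = 1/2 - u(f) / (2K)`. On the other hand `u ↦ 2u - K` is a rational map
in `y`, and `f1`, `f2` are its preimages of `f0`, `-f0`. As `u` is odd, `u(f1)` and `u(f2)` are
`(K ± u(f0)) / 2`. Both transformation laws hold because the maps in question multiply the
differential `du` by a constant.
-/

open Real

/-- Incomplete elliptic integral of the first kind `F(φ,e)`. -/
noncomputable def ellF (φ e : ℝ) : ℝ :=
  ∫ τ in (0:ℝ)..φ, 1 / Real.sqrt (1 - e ^ 2 * Real.sin τ ^ 2)

/-- Complete elliptic integral of the first kind `K(e)`. -/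
noncomputable def ellK (e : ℝ) : ℝ := ellF (Real.pi / 2) e

/-- The angle `ω̂(e,f)`. -/
noncomputable def omegaHat (e f : ℝ) : ℝ :=
  Real.arcsin (Real.sqrt ((e ^ 2 - f ^ 2) / (e ^ 2 * (1 - f ^ 2))))

/-- The billiard rotation number `ρ̂(e,f)`. -/
noncomputable def rhoHat (e f : ℝ) : ℝ := ellF (omegaHat e f) e / (2 * ellK e)

open Set

section EllipticIntegral

variable {e : ℝ}

lemma one_sub_sq_mul_sin_sq_pos (he : e ^ 2 < 1) (τ : ℝ) : 0 < 1 - e ^ 2 * sin τ ^ 2 := by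
  nlinarith [sin_sq_le_one τ, sq_nonneg e]

lemma continuous_ellF_integrand (he : e ^ 2 < 1) :
    Continuous fun τ : ℝ => 1 / √(1 - e ^ 2 * sin τ ^ 2) :=
  continuous_const.div (by fun_prop) fun τ => (sqrt_pos.2 (one_sub_sq_mul_sin_sq_pos he τ)).ne'

lemma hasDerivAt_ellF (he : e ^ 2 < 1) (φ : ℝ) :
    HasDerivAt (fun φ => ellF φ e) (1 / √(1 - e ^ 2 * sin φ ^ 2)) φ :=
  (continuous_ellF_integrand he).integral_hasStrictDerivAt 0 φ |>.hasDerivAt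

lemma ellF_neg (φ e : ℝ) : ellF (-φ) e = -ellF φ e := by
  have reflect := intervalIntegral.integral_comp_neg (a := 0) (b := φ)
    fun τ => 1 / √(1 - e ^ 2 * sin τ ^ 2)
  simp only [sin_neg, neg_sq, neg_zero] at reflect
  rw [ellF, ellF, reflect, intervalIntegral.integral_symm]

lemma ellK_pos (he : e ^ 2 < 1) : 0 < ellK e :=
  intervalIntegral.intervalIntegral_pos_of_pos
    ((continuous_ellF_integrand he).intervalIntegrable _ _)
    (fun τ => one_div_pos.2 (sqrt_pos.2 (one_sub_sq_mul_sin_sq_pos he τ))) pi_div_two_pos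

end EllipticIntegral

/-- The inverse of `u ↦ e sn(u, e)` on `[-K(e), K(e)]`, that is, the elliptic integral of the first
kind in the coordinate `y = e sin φ`. -/
noncomputable def arcSn (e y : ℝ) : ℝ := ellF (arcsin (y / e)) e

/-- The quartic `(1 - y²)(e² - y²)` whose inverse square root is the derivative of `arcSn e`. -/
def snQuartic (e y : ℝ) : ℝ := (1 - y ^ 2) * (e ^ 2 - y ^ 2)

/-- The reflection `u ↦ K - u` in the coordinate `y = e sn(u, e)`, for `0 ≤ u ≤ K`. -/
noncomputable def snReflect (e y : ℝ) : ℝ := √((e ^ 2 - y ^ 2) / (1 - y ^ 2))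

/-- The map `u ↦ 2u - K` in the coordinate `y = e sn(u, e)`. -/
noncomputable def snDouble (e y : ℝ) : ℝ :=
  e * (2 * y ^ 2 - e ^ 2 - y ^ 4) / (e ^ 2 * (1 - 2 * y ^ 2) + y ^ 4)

/-- The map `u ↦ (u + K) / 2` in the coordinate `y = e sn(u, e)`, for `-K ≤ u ≤ K`. -/
noncomputable def snHalf (e y : ℝ) : ℝ :=
  √(e * (e + y) / (1 + e * y + √((1 - e ^ 2) * (1 - y ^ 2))))

section ArcSn

variable {e y : ℝ}

lemma arcSn_zero (e : ℝ) : arcSn e 0 = 0 := by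
  simp [arcSn, ellF]

lemma arcSn_neg (e y : ℝ) : arcSn e (-y) = -arcSn e y := by
  rw [arcSn, neg_div, arcsin_neg, ellF_neg, arcSn]

lemma arcSn_self (he : e ≠ 0) : arcSn e e = ellK e := by
  rw [arcSn, div_self he, arcsin_one, ellK]

lemma continuous_arcSn (he : e ^ 2 < 1) : Continuous (arcSn e) := by
  have cont_ellF : Continuous fun φ => ellF φ e :=
    continuous_iff_continuousAt.2 fun φ => (hasDerivAt_ellF he φ).continuousAt
  exact cont_ellF.comp (by fun_prop)

lemma snQuartic_pos (he₁ : e < 1) (hy : y ∈ Ioo (-e) e) : 0 < snQuartic e y := by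
  obtain ⟨hy₁, hy₂⟩ := hy
  exact mul_pos (by nlinarith) (by nlinarith)

lemma hasDerivAt_arcSn (he₁ : e < 1) (hy : y ∈ Ioo (-e) e) :
    HasDerivAt (arcSn e) (1 / √(snQuartic e y)) y := by
  have he₀ : 0 < e := by linarith [hy.1, hy.2]
  have he : e ^ 2 < 1 := (sq_lt_one_iff₀ he₀.le).2 he₁
  have lo : -1 < y / e := by rw [lt_div_iff₀ he₀]; linarith [hy.1]
  have hi : y / e < 1 := (div_lt_one he₀).2 hy.2
  have chain := (hasDerivAt_ellF he (arcsin (y / e))).comp y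
    ((hasDerivAt_arcsin lo.ne' hi.ne).comp y ((hasDerivAt_id y).div_const e))
  refine chain.congr_deriv ?_
  have integrand_radicand : 1 - e ^ 2 * (y / e) ^ 2 = 1 - y ^ 2 := by field_simp
  have arcsin_radicand : √(1 - (y / e) ^ 2) * e = √(e ^ 2 - y ^ 2) := by
    rw [← sqrt_sq he₀.le, ← sqrt_mul' _ (sq_nonneg e), sqrt_sq he₀.le]
    congr 1
    field_simp
  have one_sub_pos : 0 ≤ 1 - y ^ 2 := by nlinarith [hy.1, hy.2]
  rw [sin_arcsin lo.le hi.le, integrand_radicand, snQuartic, sqrt_mul one_sub_pos,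
    ← arcsin_radicand]
  simp only [div_mul_div_comm, mul_one]

end ArcSn

section Transformation

variable {e c k t x y : ℝ} {φ κ : ℝ → ℝ}

lemma hasDerivAt_arcSn_comp (he₁ : e < 1) (ht : t ∈ Ioo (-e) e) (hφt : φ t ∈ Ioo (-e) e)
    (hk : 0 < k) (quartic : snQuartic e (φ t) = k ^ 2 * snQuartic e t)
    (hφ : HasDerivAt φ (c * k) t) :
    HasDerivAt (fun t => arcSn e (φ t)) (c * (1 / √(snQuartic e t))) t := by
  refine ((hasDerivAt_arcSn he₁ hφt).comp t hφ).congr_deriv ?_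
  have := sqrt_pos.2 (snQuartic_pos he₁ ht)
  rw [quartic, sqrt_mul (sq_nonneg k), sqrt_sq hk.le]
  field_simp

lemma arcSn_comp_sub_arcSn_comp (he₁ : e < 1) (hxy : x ≤ y)
    (sub : Ioo x y ⊆ Ioo (-e) e) (cont : ContinuousOn φ (Icc x y))
    (maps : MapsTo φ (Ioo x y) (Ioo (-e) e)) (hκ : ∀ t ∈ Ioo x y, 0 < κ t)
    (quartic : ∀ t ∈ Ioo x y, snQuartic e (φ t) = κ t ^ 2 * snQuartic e t)
    (deriv : ∀ t ∈ Ioo x y, HasDerivAt φ (c * κ t) t) :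
    arcSn e (φ y) - arcSn e (φ x) = c * (arcSn e y - arcSn e x) := by
  rcases hxy.eq_or_lt with rfl | hlt
  · simp
  obtain ⟨m, hm⟩ := nonempty_Ioo.2 hlt
  have he₀ : 0 < e := by linarith [(sub hm).1, (sub hm).2]
  have cont_arcSn := continuous_arcSn ((sq_lt_one_iff₀ he₀.le).2 he₁)
  have cont_diff : ContinuousOn (fun t => arcSn e (φ t) - c * arcSn e t) (Icc x y) :=
    (cont_arcSn.comp_continuousOn cont).sub (cont_arcSn.const_mul c).continuousOn
  have deriv_diff : ∀ t ∈ Ioo x y,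
      HasDerivAt (fun t => arcSn e (φ t) - c * arcSn e t) 0 t := fun t ht =>
    ((hasDerivAt_arcSn_comp he₁ (sub ht) (maps ht) (hκ t ht) (quartic t ht) (deriv t ht)).sub
      ((hasDerivAt_arcSn he₁ (sub ht)).const_mul c)).congr_deriv (sub_self _)
  obtain ⟨-, -, slope⟩ :=
    exists_hasDerivAt_eq_slope _ (fun _ => 0) hlt cont_diff deriv_diff
  rw [eq_div_iff (sub_pos.2 hlt).ne'] at slope
  linarith

end Transformation

section Reflection

variable {e y : ℝ}

lemma snReflect_sq (hy : y ^ 2 ≤ e ^ 2) (hy₁ : y ^ 2 < 1) :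
    snReflect e y ^ 2 = (e ^ 2 - y ^ 2) / (1 - y ^ 2) :=
  sq_sqrt (div_nonneg (sub_nonneg.2 hy) (sub_pos.2 hy₁).le)

lemma snReflect_pos (hy : y ^ 2 < e ^ 2) (hy₁ : y ^ 2 < 1) : 0 < snReflect e y :=
  sqrt_pos.2 (div_pos (sub_pos.2 hy) (sub_pos.2 hy₁))

lemma snReflect_lt_self (he₁ : e < 1) (hy : y ∈ Ioo 0 e) : snReflect e y < e := by
  obtain ⟨hy₀, hye⟩ := hy
  have he₀ : 0 < e := hy₀.trans hye
  have one_sub_pos : 0 < 1 - y ^ 2 := by nlinarith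
  rw [snReflect, sqrt_lt' he₀, div_lt_iff₀ one_sub_pos]
  have : 0 < y ^ 2 * (1 - e ^ 2) := mul_pos (by positivity) (by nlinarith)
  linarith

lemma hasDerivAt_snReflect (hy : y ^ 2 < e ^ 2) (hy₁ : y ^ 2 < 1) :
    HasDerivAt (snReflect e) (-1 * ((1 - e ^ 2) * y / ((1 - y ^ 2) ^ 2 * snReflect e y))) y := by
  have h₁ : 0 < 1 - y ^ 2 := sub_pos.2 hy₁
  have h₂ : 0 < e ^ 2 - y ^ 2 := sub_pos.2 hy
  have pos := snReflect_pos hy hy₁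
  have quotient := (((hasDerivAt_pow 2 y).const_sub (e ^ 2)).div
    ((hasDerivAt_pow 2 y).const_sub 1) h₁.ne').sqrt (div_pos h₂ h₁).ne'
  refine quotient.congr_deriv ?_
  change _ / (2 * snReflect e y) = _
  field_simp
  ring

lemma snQuartic_snReflect (hy : y ^ 2 < e ^ 2) (hy₁ : y ^ 2 < 1) :
    snQuartic e (snReflect e y)
      = ((1 - e ^ 2) * y / ((1 - y ^ 2) ^ 2 * snReflect e y)) ^ 2 * snQuartic e y := by
  have h₁ : 0 < 1 - y ^ 2 := sub_pos.2 hy₁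
  have h₂ : 0 < e ^ 2 - y ^ 2 := sub_pos.2 hy
  simp only [snQuartic, div_pow, mul_pow, snReflect_sq hy.le hy₁]
  field_simp
  ring

lemma continuousOn_snReflect (he₁ : e < 1) : ContinuousOn (snReflect e) (Icc 0 e) := by
  refine (ContinuousOn.div (by fun_prop) (by fun_prop) fun t ht => ?_).sqrt
  have : 0 < 1 - t ^ 2 := by nlinarith [ht.1, ht.2]
  exact this.ne'

theorem arcSn_snReflect (he₀ : 0 < e) (he₁ : e < 1) (hy : y ∈ Icc 0 e) :
    arcSn e (snReflect e y) = ellK e - arcSn e y := by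
  have bounds : ∀ t ∈ Ioo y e, t ∈ Ioo 0 e ∧ t ^ 2 < e ^ 2 ∧ t ^ 2 < 1 := fun t ht => by
    have ht₀ : 0 < t := hy.1.trans_lt ht.1
    exact ⟨⟨ht₀, ht.2⟩, by nlinarith [ht.2], by nlinarith [ht.2]⟩
  have kappa_pos : ∀ t ∈ Ioo y e, 0 < (1 - e ^ 2) * t / ((1 - t ^ 2) ^ 2 * snReflect e t) := by
    intro t ht
    obtain ⟨⟨ht₀, -⟩, hte, ht₁⟩ := bounds t ht
    have : 0 < 1 - e ^ 2 := by nlinarith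
    have : 0 < 1 - t ^ 2 := sub_pos.2 ht₁
    have := snReflect_pos hte ht₁
    positivity
  have transform := arcSn_comp_sub_arcSn_comp he₁ hy.2
    (fun t ht => ⟨by linarith [(bounds t ht).1.1], ht.2⟩)
    ((continuousOn_snReflect he₁).mono (Icc_subset_Icc_left hy.1))
    (fun t ht => ⟨by linarith [snReflect_pos (bounds t ht).2.1 (bounds t ht).2.2],
      snReflect_lt_self he₁ (bounds t ht).1⟩)
    kappa_pos
    (fun t ht => snQuartic_snReflect (bounds t ht).2.1 (bounds t ht).2.2)
    (fun t ht => hasDerivAt_snReflect (bounds t ht).2.1 (bounds t ht).2.2)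
  have snReflect_self : snReflect e e = 0 := by simp [snReflect]
  rw [snReflect_self, arcSn_zero, arcSn_self he₀.ne'] at transform
  linarith

lemma omegaHat_eq_arcsin_snReflect (he₀ : 0 ≤ e) (f : ℝ) :
    omegaHat e f = arcsin (snReflect e f / e) := by
  rw [omegaHat, snReflect, mul_comm (e ^ 2), ← div_div, sqrt_div' _ (sq_nonneg e), sqrt_sq he₀]

theorem rhoHat_eq_half_sub_arcSn (he₀ : 0 < e) (he₁ : e < 1) {f : ℝ} (hf : f ∈ Icc 0 e) :
    rhoHat e f = 1 / 2 - arcSn e f / (2 * ellK e) := by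
  have K_pos := ellK_pos ((sq_lt_one_iff₀ he₀.le).2 he₁)
  rw [rhoHat, omegaHat_eq_arcsin_snReflect he₀.le, ← arcSn, arcSn_snReflect he₀ he₁ hf]
  field_simp

end Reflection

section Doubling

variable {e y : ℝ}

lemma snDouble_denom_pos (he₀ : 0 < e) (he₁ : e < 1) (y : ℝ) :
    0 < e ^ 2 * (1 - 2 * y ^ 2) + y ^ 4 := by
  have : 0 < e ^ 2 * (1 - e ^ 2) := mul_pos (by positivity) (by nlinarith)
  nlinarith [sq_nonneg (y ^ 2 - e ^ 2)]

lemma snDouble_self (he₀ : 0 < e) (he₁ : e < 1) : snDouble e e = e := by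
  rw [snDouble, div_eq_iff (snDouble_denom_pos he₀ he₁ e).ne']
  ring

lemma sub_snDouble (he₀ : 0 < e) (he₁ : e < 1) (y : ℝ) :
    e - snDouble e y
      = 2 * e * (e ^ 2 - y ^ 2) * (1 - y ^ 2) / (e ^ 2 * (1 - 2 * y ^ 2) + y ^ 4) := by
  have := (snDouble_denom_pos he₀ he₁ y).ne'
  rw [snDouble]
  field_simp
  ring

lemma add_snDouble (he₀ : 0 < e) (he₁ : e < 1) (y : ℝ) :
    e + snDouble e y = 2 * e * (1 - e ^ 2) * y ^ 2 / (e ^ 2 * (1 - 2 * y ^ 2) + y ^ 4) := by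
  have := (snDouble_denom_pos he₀ he₁ y).ne'
  rw [snDouble]
  field_simp
  ring

lemma one_sub_snDouble_sq (he₀ : 0 < e) (he₁ : e < 1) (y : ℝ) :
    1 - snDouble e y ^ 2
      = (1 - e ^ 2) * (e ^ 2 - y ^ 4) ^ 2 / (e ^ 2 * (1 - 2 * y ^ 2) + y ^ 4) ^ 2 := by
  have := (snDouble_denom_pos he₀ he₁ y).ne'
  rw [snDouble]
  field_simp
  ring

lemma snDouble_mem_Ioo (he₁ : e < 1) (hy : y ∈ Ioo 0 e) : snDouble e y ∈ Ioo (-e) e := by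
  obtain ⟨hy₀, hye⟩ := hy
  have he₀ : 0 < e := hy₀.trans hye
  have denom_pos := snDouble_denom_pos he₀ he₁ y
  have h₁ : 0 < 1 - e ^ 2 := by nlinarith
  have h₂ : 0 < e ^ 2 - y ^ 2 := by nlinarith
  have h₃ : 0 < 1 - y ^ 2 := by linarith
  have sub_pos : 0 < e - snDouble e y := by rw [sub_snDouble he₀ he₁]; positivity
  have add_pos : 0 < e + snDouble e y := by rw [add_snDouble he₀ he₁]; positivity
  exact ⟨by linarith, by linarith⟩

lemma hasDerivAt_snDouble (he₀ : 0 < e) (he₁ : e < 1) (y : ℝ) :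
    HasDerivAt (snDouble e) (2 * (2 * e * (1 - e ^ 2) * y * (e ^ 2 - y ^ 4)
      / (e ^ 2 * (1 - 2 * y ^ 2) + y ^ 4) ^ 2)) y := by
  have denom_ne := (snDouble_denom_pos he₀ he₁ y).ne'
  have numer := ((((hasDerivAt_pow 2 y).const_mul 2).sub_const (e ^ 2)).sub
    (hasDerivAt_pow 4 y)).const_mul e
  have denom := ((((hasDerivAt_pow 2 y).const_mul 2).const_sub 1).const_mul (e ^ 2)).add
    (hasDerivAt_pow 4 y)
  refine (numer.div denom denom_ne).congr_deriv ?_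
  simp only [Pi.add_apply, Pi.sub_apply]
  field_simp
  ring

lemma snQuartic_snDouble (he₀ : 0 < e) (he₁ : e < 1) (y : ℝ) :
    snQuartic e (snDouble e y) = (2 * e * (1 - e ^ 2) * y * (e ^ 2 - y ^ 4)
      / (e ^ 2 * (1 - 2 * y ^ 2) + y ^ 4) ^ 2) ^ 2 * snQuartic e y := by
  have := (snDouble_denom_pos he₀ he₁ y).ne'
  rw [snQuartic, sq_sub_sq, add_snDouble he₀ he₁, sub_snDouble he₀ he₁,
    one_sub_snDouble_sq he₀ he₁, snQuartic]
  field_simp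

theorem arcSn_snDouble (he₀ : 0 < e) (he₁ : e < 1) (hy : y ∈ Icc 0 e) :
    arcSn e (snDouble e y) = 2 * arcSn e y - ellK e := by
  have sub_Ioo : Ioo y e ⊆ Ioo 0 e := Ioo_subset_Ioo_left hy.1
  have kappa_pos : ∀ t ∈ Ioo y e, 0 < 2 * e * (1 - e ^ 2) * t * (e ^ 2 - t ^ 4)
      / (e ^ 2 * (1 - 2 * t ^ 2) + t ^ 4) ^ 2 := by
    intro t ht
    obtain ⟨ht₀, hte⟩ := sub_Ioo ht
    have : 0 < 1 - e ^ 2 := by nlinarith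
    have sq_lt : t ^ 2 < e := by nlinarith
    have : 0 < e ^ 2 - t ^ 4 := by nlinarith [sq_nonneg t]
    have := snDouble_denom_pos he₀ he₁ t
    positivity
  have transform := arcSn_comp_sub_arcSn_comp he₁ hy.2
    (sub_Ioo.trans (Ioo_subset_Ioo_left (by linarith)))
    (fun t _ => (hasDerivAt_snDouble he₀ he₁ t).continuousAt.continuousWithinAt)
    (fun t ht => snDouble_mem_Ioo he₁ (sub_Ioo ht)) kappa_pos
    (fun t _ => snQuartic_snDouble he₀ he₁ t) (fun t _ => hasDerivAt_snDouble he₀ he₁ t)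
  rw [snDouble_self he₀ he₁, arcSn_self he₀.ne'] at transform
  linarith

end Doubling

section Halving

variable {e f : ℝ}

lemma snHalf_denom_pos (he₁ : e < 1) (hf : f ∈ Ioo (-e) e) :
    0 < 1 + e * f + √((1 - e ^ 2) * (1 - f ^ 2)) := by
  have : 0 < 1 + e * f := by nlinarith [hf.1, hf.2]
  positivity

lemma snHalf_pos (he₁ : e < 1) (hf : f ∈ Ioo (-e) e) : 0 < snHalf e f :=
  sqrt_pos.2 (div_pos (mul_pos (by linarith [hf.1, hf.2]) (by linarith [hf.1]))
    (snHalf_denom_pos he₁ hf))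

lemma snHalf_sq (he₁ : e < 1) (hf : f ∈ Ioo (-e) e) :
    snHalf e f ^ 2 = e * (e + f) / (1 + e * f + √((1 - e ^ 2) * (1 - f ^ 2))) :=
  sq_sqrt (sqrt_pos.1 (snHalf_pos he₁ hf)).le

lemma sq_sub_snHalf_sq (he₁ : e < 1) (hf : f ∈ Ioo (-e) e) :
    e ^ 2 - snHalf e f ^ 2 = e * √(1 - e ^ 2) * (e * √(1 - f ^ 2) - f * √(1 - e ^ 2))
      / (1 + e * f + √((1 - e ^ 2) * (1 - f ^ 2))) := by
  have h₁ : 0 ≤ 1 - e ^ 2 := by nlinarith [hf.1, hf.2]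
  rw [snHalf_sq he₁ hf, eq_div_iff (snHalf_denom_pos he₁ hf).ne', sub_mul,
    div_mul_cancel₀ _ (snHalf_denom_pos he₁ hf).ne', sqrt_mul h₁]
  linear_combination e * f * sq_sqrt h₁

lemma one_sub_snHalf_sq (he₁ : e < 1) (hf : f ∈ Ioo (-e) e) :
    1 - snHalf e f ^ 2 = √(1 - e ^ 2) * (√(1 - e ^ 2) + √(1 - f ^ 2))
      / (1 + e * f + √((1 - e ^ 2) * (1 - f ^ 2))) := by
  have h₁ : 0 ≤ 1 - e ^ 2 := by nlinarith [hf.1, hf.2]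
  rw [snHalf_sq he₁ hf, eq_div_iff (snHalf_denom_pos he₁ hf).ne', sub_mul,
    div_mul_cancel₀ _ (snHalf_denom_pos he₁ hf).ne', sqrt_mul h₁]
  linear_combination -sq_sqrt h₁

lemma snHalf_lt_self (he₁ : e < 1) (hf : f ∈ Ioo (-e) e) : snHalf e f < e := by
  have he₀ : 0 < e := by linarith [hf.1, hf.2]
  have h₁ : 0 < 1 - e ^ 2 := by nlinarith
  have h₂ : 0 < 1 - f ^ 2 := by nlinarith [hf.1, hf.2]
  have mul_sqrt_lt : f * √(1 - e ^ 2) < e * √(1 - f ^ 2) := by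
    refine lt_of_abs_lt (abs_lt_of_sq_lt_sq ?_ (by positivity))
    rw [mul_pow, mul_pow, sq_sqrt h₁.le, sq_sqrt h₂.le]
    nlinarith [hf.1, hf.2]
  have diff_pos : 0 < e ^ 2 - snHalf e f ^ 2 := by
    rw [sq_sub_snHalf_sq he₁ hf]
    exact div_pos (mul_pos (by positivity) (sub_pos.2 mul_sqrt_lt)) (snHalf_denom_pos he₁ hf)
  exact lt_of_pow_lt_pow_left₀ 2 he₀.le (sub_pos.1 diff_pos)

lemma snHalf_mem_Ioo (he₁ : e < 1) (hf : f ∈ Ioo (-e) e) : snHalf e f ∈ Ioo 0 e :=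
  ⟨snHalf_pos he₁ hf, snHalf_lt_self he₁ hf⟩

lemma snDouble_snHalf (he₁ : e < 1) (hf : f ∈ Ioo (-e) e) : snDouble e (snHalf e f) = f := by
  have he₀ : 0 < e := by linarith [hf.1, hf.2]
  have h₁ : 0 ≤ 1 - e ^ 2 := by nlinarith
  have h₂ : 0 ≤ 1 - f ^ 2 := by nlinarith [hf.1, hf.2]
  have denom_ne := (snHalf_denom_pos he₁ hf).ne'
  have factor : (e - f) * (1 + e * f + √((1 - e ^ 2) * (1 - f ^ 2)))
      = (e * √(1 - f ^ 2) - f * √(1 - e ^ 2)) * (√(1 - e ^ 2) + √(1 - f ^ 2)) := by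
    rw [sqrt_mul h₁]
    linear_combination f * sq_sqrt h₁ - e * sq_sqrt h₂
  have cross : (e - f) * ((1 - e ^ 2) * snHalf e f ^ 2)
      = (e + f) * ((e ^ 2 - snHalf e f ^ 2) * (1 - snHalf e f ^ 2)) := by
    rw [sq_sub_snHalf_sq he₁ hf, one_sub_snHalf_sq he₁ hf, snHalf_sq he₁ hf]
    nth_rw 1 [← sq_sqrt h₁]
    field_simp
    linear_combination (e + f) * √(1 - e ^ 2) ^ 2 * factor
  rw [snDouble, div_eq_iff (snDouble_denom_pos he₀ he₁ _).ne']
  linear_combination cross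

theorem arcSn_snHalf (he₁ : e < 1) (hf : f ∈ Ioo (-e) e) :
    arcSn e (snHalf e f) = (ellK e + arcSn e f) / 2 := by
  have he₀ : 0 < e := by linarith [hf.1, hf.2]
  have double := arcSn_snDouble he₀ he₁ (Ioo_subset_Icc_self (snHalf_mem_Ioo he₁ hf))
  rw [snDouble_snHalf he₁ hf] at double
  linarith

theorem rhoHat_snHalf (he₁ : e < 1) (hf : f ∈ Ioo (-e) e) :
    rhoHat e (snHalf e f) = 1 / 4 - arcSn e f / (4 * ellK e) := by
  have he₀ : 0 < e := by linarith [hf.1, hf.2]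
  have K_pos := ellK_pos ((sq_lt_one_iff₀ he₀.le).2 he₁)
  rw [rhoHat_eq_half_sub_arcSn he₀ he₁ (Ioo_subset_Icc_self (snHalf_mem_Ioo he₁ hf)),
    arcSn_snHalf he₁ hf]
  field_simp
  ring

end Halving

/-- Half-rotation: the transformations `f0 ↦ f1` and `f0 ↦ f2`
stay in `Δ` and halve, respectively complement-halve, the billiard rotation
number. -/
theorem half_rotation (e f0 : ℝ) (hf : 0 < f0) (hfe : f0 < e) (he : e < 1) :
    let s := Real.sqrt ((1 - e ^ 2) * (1 - f0 ^ 2))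
    let f1 := Real.sqrt (e * (e + f0) / (1 + e * f0 + s))
    let f2 := Real.sqrt (e * (e - f0) / (1 - e * f0 + s))
    (0 < f1 ∧ f1 < e) ∧ (0 < f2 ∧ f2 < e) ∧
    rhoHat e f1 = rhoHat e f0 / 2 ∧
    rhoHat e f2 = 1 / 2 - rhoHat e f0 / 2 := by
  intro s f1 f2
  have he₀ : 0 < e := hf.trans hfe
  have mem : f0 ∈ Ioo (-e) e := ⟨by linarith, hfe⟩
  have neg_mem : -f0 ∈ Ioo (-e) e := ⟨neg_lt_neg hfe, by linarith⟩
  have f1_eq : f1 = snHalf e f0 := rfl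
  have f2_eq : f2 = snHalf e (-f0) := by
    simp only [f2, s, snHalf, neg_sq, mul_neg, ← sub_eq_add_neg]
  rw [f1_eq, f2_eq, rhoHat_snHalf he mem, rhoHat_snHalf he neg_mem, arcSn_neg,
    rhoHat_eq_half_sub_arcSn he₀ he ⟨hf.le, hfe.le⟩]
  exact ⟨snHalf_mem_Ioo he mem, snHalf_mem_Ioo he neg_mem, by ring, by ring⟩
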